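/- Let m ≥ 2 and p₁, …, p_m ∈ (1, ∞) with 1/p₁ + ⋯ + 1/p_m < 1, and let D : ℓ_{p₁} × ⋯ × ℓ_{p_m} → 𝕂 be a bounded nonnegative m-linear form. Set r_i := p_i / p_m* for i = 1, …, m−1, where p_m* is the conjugate exponent of p_m. Then there is a bounded nonnegative (m−1)-linear form A : ℓ_{r₁} × ⋯ × ℓ_{r_{m−1}} → 𝕂 with A(e_{j₁}, …, e_{j_{m−1}}) = Σ_{j_m=1}^∞ D(e_{j₁}, …, e_{j_m})^{p_m*} for all indices, and ‖A‖ ≤ ‖D‖^{p_m*}. -/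

import Mathlib

open scoped ENNReal

/-!
Fix the first `m` arguments of `D`. What remains is a functional on `ℓ_s`, where `s` is the last
exponent, and by duality its coefficients have `ℓ_q` norm at most its norm, where `q` is conjugate
to `s`. Evaluate this at the finitely supported vectors `yᵢ` with entries `‖xᵢ(n)‖ ^ (1 / q)`: the
`k`-th coefficient is the sum over `j` of the nonnegative terms `D(e_j, e_k) ∏ᵢ yᵢ(jᵢ)`, and since
`t ↦ t ^ q` is superadditive, `∑ j, ∑ k, D(e_j, e_k) ^ q * ∏ᵢ ‖xᵢ(jᵢ)‖` is at most
`‖D‖ ^ q * ∏ᵢ ‖yᵢ‖ ^ q`, hence at most `‖D‖ ^ q * ∏ᵢ ‖xᵢ‖`. So the series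
`∑ j, (∑ k, D(e_j, e_k) ^ q) * ∏ᵢ xᵢ(jᵢ)` converges absolutely on all of `ℓ_{r₁} × ⋯ × ℓ_{r_m}`
and defines a form with the required bound.
-/

open Finset
open scoped ComplexOrder

theorem sum_rpow_le_rpow_sum {ι : Type*} (s : Finset ι) {f : ι → ℝ} (hf : ∀ i ∈ s, 0 ≤ f i)
    {q : ℝ} (hq : 1 ≤ q) : ∑ i ∈ s, f i ^ q ≤ (∑ i ∈ s, f i) ^ q := by
  induction s using Finset.cons_induction with
  | empty => simp [Real.zero_rpow (by linarith : q ≠ 0)]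
  | cons a s ha ih =>
    simp only [sum_cons, forall_mem_cons] at hf ⊢
    calc f a ^ q + ∑ i ∈ s, f i ^ q ≤ f a ^ q + (∑ i ∈ s, f i) ^ q := by gcongr; exact ih hf.2
      _ ≤ (f a + ∑ i ∈ s, f i) ^ q := Real.add_rpow_le_rpow_add hf.1 (sum_nonneg hf.2) hq

theorem norm_sum_single_le_one {β : Type*} [DecidableEq β] {E : β → Type*}
    [∀ k, NormedAddCommGroup (E k)] {s : ℝ≥0∞} (hs : 0 < s.toReal) {v : ∀ k, E k} {K : Finset β}
    (hv : ∑ k ∈ K, ‖v k‖ ^ s.toReal ≤ 1) : ‖∑ k ∈ K, lp.single s k (v k)‖ ≤ 1 := by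
  rwa [← Real.rpow_le_rpow_iff (lp.norm_nonneg' _) zero_le_one hs, Real.one_rpow,
    lp.norm_sum_single hs]

section Dual

variable {𝕂 : Type*} [RCLike 𝕂] {β : Type*} [DecidableEq β] {s : ℝ≥0∞} [Fact (1 ≤ s)] {q : ℝ}

theorem sum_norm_apply_single_rpow_le (hsq : s.toReal.HolderConjugate q)
    (φ : lp (fun _ : β => 𝕂) s →L[𝕂] 𝕂) (K : Finset β) :
    ∑ k ∈ K, ‖φ (lp.single s k 1)‖ ^ q ≤ ‖φ‖ ^ q := by
  obtain ⟨⟨g, hg, hgφ⟩, -⟩ := NNReal.isGreatest_Lp K (fun k => ‖φ (lp.single s k 1)‖₊) hsq.symm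
  choose c hc hcφ using fun k => RCLike.exists_norm_eq_mul_self (φ (lp.single s k 1))
  set v : lp (fun _ : β => 𝕂) s := ∑ k ∈ K, lp.single s k (((g k : ℝ) : 𝕂) * c k) with hv
  have norm_v : ‖v‖ ≤ 1 := by
    refine norm_sum_single_le_one hsq.pos ?_
    simpa [hc] using (mod_cast hg : ∑ k ∈ K, (g k : ℝ) ^ s.toReal ≤ 1)
  have apply_v : φ v = ((∑ k ∈ K, ‖φ (lp.single s k 1)‖ * g k : ℝ) : 𝕂) := by
    rw [hv, map_sum, RCLike.ofReal_sum]
    refine sum_congr rfl fun k _ => ?_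
    rw [← mul_one (_ * c k), ← smul_eq_mul, lp.single_smul, map_smul, RCLike.ofReal_mul, hcφ,
      smul_eq_mul]
    ring
  have Lq_norm_eq : (∑ k ∈ K, ‖φ (lp.single s k 1)‖ ^ q) ^ q⁻¹ =
      ∑ k ∈ K, ‖φ (lp.single s k 1)‖ * g k := by
    simpa using congrArg NNReal.toReal hgφ.symm
  rw [← Real.rpow_inv_le_iff_of_pos (by positivity) (norm_nonneg _) hsq.symm.pos, Lq_norm_eq]
  calc ∑ k ∈ K, ‖φ (lp.single s k 1)‖ * g k = ‖φ v‖ := by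
        rw [apply_v, RCLike.norm_of_nonneg (by positivity)]
    _ ≤ ‖φ‖ := φ.unit_le_opNorm v norm_v

theorem summable_norm_apply_single_rpow (hsq : s.toReal.HolderConjugate q)
    (φ : lp (fun _ : β => 𝕂) s →L[𝕂] 𝕂) : Summable fun k => ‖φ (lp.single s k 1)‖ ^ q :=
  summable_of_sum_le (fun _ => by positivity) (sum_norm_apply_single_rpow_le hsq φ)

theorem tsum_norm_apply_single_rpow_le (hsq : s.toReal.HolderConjugate q)
    (φ : lp (fun _ : β => 𝕂) s →L[𝕂] 𝕂) : ∑' k, ‖φ (lp.single s k 1)‖ ^ q ≤ ‖φ‖ ^ q :=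
  (summable_norm_apply_single_rpow hsq φ).tsum_le_of_sum_le (sum_norm_apply_single_rpow_le hsq φ)

end Dual

section Coefficients

variable {ι : Type*} [Fintype ι] {α : ι → Type*} {p : ι → ℝ≥0∞}
  {𝕂 G : Type*} [NontriviallyNormedField 𝕂] [NormedAddCommGroup G] [NormedSpace 𝕂 G]

/-- The multilinear map `x ↦ (∏ᵢ xᵢ(jᵢ)) • z` on `∏ᵢ ℓ_{p i}`, whose coefficient is `z` at the
multi-index `j` and zero elsewhere; multilinear maps with prescribed coefficients are series of
these. -/
noncomputable def monomialMap (p : ι → ℝ≥0∞) (j : ∀ i, α i) (z : G) :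
    MultilinearMap 𝕂 (fun i => lp (fun _ : α i => 𝕂) (p i)) G :=
  (MultilinearMap.mkPiRing 𝕂 ι z).compLinearMap fun i => lp.evalₗ (fun _ => 𝕂) (p i) (j i)

theorem monomialMap_apply (j : ∀ i, α i) (z : G) (x : ∀ i, lp (fun _ : α i => 𝕂) (p i)) :
    monomialMap p j z x = (∏ i, x i (j i)) • z := rfl

theorem norm_monomialMap_apply (j : ∀ i, α i) (z : G) (x : ∀ i, lp (fun _ : α i => 𝕂) (p i)) :
    ‖monomialMap p j z x‖ = ‖z‖ * ∏ i, ‖x i (j i)‖ := by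
  rw [monomialMap_apply, norm_smul, norm_prod, mul_comm]

variable [∀ i, DecidableEq (α i)]

/-- The tuple of unit vectors `(e_{j i})ᵢ`, where `e_{j i}` lies in `ℓ_{p i}`; a multilinear map on
`∏ᵢ ℓ_{p i}` has its coefficients as values on these tuples. -/
noncomputable abbrev unitTuple (𝕂 : Type*) [NormedField 𝕂] (p : ι → ℝ≥0∞) (j : ∀ i, α i) :
    ∀ i, lp (fun _ : α i => 𝕂) (p i) :=
  fun i => lp.single (p i) (j i) 1

theorem monomialMap_unitTuple_self (j : ∀ i, α i) (z : G) :
    monomialMap p j z (unitTuple 𝕂 p j) = z := by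
  simp [monomialMap_apply]

theorem monomialMap_unitTuple_of_ne {j l : ∀ i, α i} (h : l ≠ j) (z : G) :
    monomialMap p l z (unitTuple 𝕂 p j) = 0 := by
  obtain ⟨i, hi⟩ := Function.ne_iff.1 h
  rw [monomialMap_apply, prod_eq_zero (mem_univ i) (lp.single_apply_ne _ _ _ hi), zero_smul]

theorem exists_continuousMultilinearMap_unitTuple_eq [CompleteSpace G] [∀ i, Fact (1 ≤ p i)]
    (c : (∀ i, α i) → G) {C : ℝ} (hC : 0 ≤ C)
    (hc : ∀ (x : ∀ i, lp (fun _ : α i => 𝕂) (p i)) (F : Finset (∀ i, α i)),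
      ∑ j ∈ F, ‖c j‖ * ∏ i, ‖x i (j i)‖ ≤ C * ∏ i, ‖x i‖) :
    ∃ A : ContinuousMultilinearMap 𝕂 (fun i => lp (fun _ : α i => 𝕂) (p i)) G,
      (∀ j, A (unitTuple 𝕂 p j) = c j) ∧ ‖A‖ ≤ C := by
  classical
  have sum_norm_le (x : ∀ i, lp (fun _ : α i => 𝕂) (p i)) (F : Finset (∀ i, α i)) :
      ∑ j ∈ F, ‖monomialMap p j (c j) x‖ ≤ C * ∏ i, ‖x i‖ := by
    simpa only [norm_monomialMap_apply] using hc x F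
  have summable_norm (x : ∀ i, lp (fun _ : α i => 𝕂) (p i)) :
      Summable fun j => ‖monomialMap p j (c j) x‖ :=
    summable_of_sum_le (fun _ => norm_nonneg _) (sum_norm_le x)
  let A₀ : MultilinearMap 𝕂 (fun i => lp (fun _ : α i => 𝕂) (p i)) G :=
    MultilinearMap.mk' (fun x => ∑' j, monomialMap p j (c j) x)
      (fun x i u v => by
        simp only [MultilinearMap.map_update_add]
        exact (summable_norm _).of_norm.tsum_add (summable_norm _).of_norm)
      (fun x i a u => by
        simp only [MultilinearMap.map_update_smul]
        exact (summable_norm _).of_norm.tsum_const_smul a)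
  have norm_A₀_le (x) : ‖A₀ x‖ ≤ C * ∏ i, ‖x i‖ :=
    (norm_tsum_le_tsum_norm (summable_norm x)).trans
      ((summable_norm x).tsum_le_of_sum_le (sum_norm_le x))
  refine ⟨A₀.mkContinuous C norm_A₀_le, fun j => ?_, A₀.mkContinuous_norm_le hC norm_A₀_le⟩
  exact (tsum_eq_single j fun l hl => monomialMap_unitTuple_of_ne hl _).trans
    (monomialMap_unitTuple_self j _)

theorem map_sum_single [DecidableEq ι] {𝕂 M : Type*} [NormedField 𝕂] [AddCommMonoid M] [Module 𝕂 M]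
    (f : MultilinearMap 𝕂 (fun i => lp (fun _ : α i => 𝕂) (p i)) M)
    (w : ∀ i, α i → 𝕂) (S : ∀ i, Finset (α i)) :
    f (fun i => ∑ n ∈ S i, lp.single (p i) n (w i n)) =
      ∑ j ∈ Fintype.piFinset S, (∏ i, w i (j i)) • f (unitTuple 𝕂 p j) := by
  rw [f.map_sum_finset]
  refine sum_congr rfl fun j _ => ?_
  rw [← f.map_smul_univ]
  simp [← lp.single_smul]

end Coefficients

theorem subset_piFinset_image {ι : Type*} [Fintype ι] [DecidableEq ι] {α : ι → Type*}
    [∀ i, DecidableEq (α i)] (F : Finset (∀ i, α i)) :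
    F ⊆ Fintype.piFinset fun i => F.image (· i) := fun _ hj =>
  Fintype.mem_piFinset.2 fun _ => mem_image_of_mem _ hj

theorem norm_sum_single_norm_rpow_inv_rpow_le {𝕂 α E : Type*} [RCLike 𝕂] [NormedAddCommGroup E]
    [DecidableEq α] {p r : ℝ≥0∞} (hr : r ≠ 0) {q : ℝ} (hq : 0 < q) (hpr : p = r * ENNReal.ofReal q)
    (x : lp (fun _ : α => E) r) (S : Finset α) :
    ‖∑ n ∈ S, lp.single (E := fun _ : α => 𝕂) p n ((‖x n‖ ^ q⁻¹ : ℝ) : 𝕂)‖ ^ q ≤ ‖x‖ := by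
  rw [← Real.le_rpow_inv_iff_of_pos (lp.norm_nonneg' _) (lp.norm_nonneg' _) hq]
  have norm_entry (n : α) : ‖((‖x n‖ ^ q⁻¹ : ℝ) : 𝕂)‖ = ‖x n‖ ^ q⁻¹ :=
    RCLike.norm_of_nonneg (by positivity)
  rcases eq_or_ne r ∞ with rfl | hr_top
  · obtain rfl : p = ∞ := by simpa [hq] using hpr
    refine lp.norm_le_of_forall_le (by positivity) fun n => ?_
    simp only [lp.coeFn_sum, lp.coeFn_single, Finset.sum_apply, sum_pi_single]
    split_ifs
    · rw [norm_entry]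
      gcongr
      exact lp.norm_apply_le_norm ENNReal.top_ne_zero x n
    · rw [norm_zero]
      positivity
  · have hp_toReal : p.toReal = r.toReal * q := by
      rw [hpr, ENNReal.toReal_mul, ENNReal.toReal_ofReal hq.le]
    have hr_pos : 0 < r.toReal := ENNReal.toReal_pos hr hr_top
    have hp_pos : 0 < p.toReal := by rw [hp_toReal]; positivity
    rw [← Real.rpow_le_rpow_iff (lp.norm_nonneg' _) (Real.rpow_nonneg (lp.norm_nonneg' _) _) hp_pos,
      lp.norm_sum_single hp_pos]
    have rpow_exponent {t : ℝ} (ht : 0 ≤ t) : (t ^ q⁻¹) ^ p.toReal = t ^ r.toReal := by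
      rw [← Real.rpow_mul ht, hp_toReal]
      field_simp
    simpa only [norm_entry, rpow_exponent (norm_nonneg _), rpow_exponent (lp.norm_nonneg' _)] using
      lp.sum_rpow_le_norm_rpow hr_pos x S

section Nonneg

variable {𝕂 ι : Type*} [RCLike 𝕂] [Fintype ι] {α : ι → Type*} [∀ i, DecidableEq (α i)]
  {p : ι → ℝ≥0∞} {q : ℝ}

theorem sum_piFinset_rpow_le_norm_map_sum_single_rpow [DecidableEq ι] (hq : 1 ≤ q)
    (f : MultilinearMap 𝕂 (fun i => lp (fun _ : α i => 𝕂) (p i)) 𝕂)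
    (hf : ∀ j, 0 ≤ f (unitTuple 𝕂 p j)) {w : ∀ i, α i → ℝ} (hw : ∀ i n, 0 ≤ w i n)
    (S : ∀ i, Finset (α i)) :
    ∑ j ∈ Fintype.piFinset S, ‖f (unitTuple 𝕂 p j)‖ ^ q * (∏ i, w i (j i)) ^ q ≤
      ‖f fun i => ∑ n ∈ S i, lp.single (p i) n (w i n : 𝕂)‖ ^ q := by
  have prod_w_nonneg (j : ∀ i, α i) : 0 ≤ ∏ i, w i (j i) := prod_nonneg fun i _ => hw i _
  have map_eq : f (fun i => ∑ n ∈ S i, lp.single (p i) n (w i n : 𝕂)) =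
      ((∑ j ∈ Fintype.piFinset S, ‖f (unitTuple 𝕂 p j)‖ * ∏ i, w i (j i) : ℝ) : 𝕂) := by
    rw [map_sum_single, RCLike.ofReal_sum]
    refine sum_congr rfl fun j _ => ?_
    rw [RCLike.ofReal_mul, RCLike.norm_of_nonneg' (hf j), RCLike.ofReal_prod, smul_eq_mul, mul_comm]
  have term_nonneg (j : ∀ i, α i) : 0 ≤ ‖f (unitTuple 𝕂 p j)‖ * ∏ i, w i (j i) :=
    mul_nonneg (norm_nonneg _) (prod_w_nonneg j)
  rw [map_eq, RCLike.norm_of_nonneg (sum_nonneg fun j _ => term_nonneg j)]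
  simp only [← Real.mul_rpow (norm_nonneg _) (prod_w_nonneg _)]
  exact sum_rpow_le_rpow_sum _ (fun j _ => term_nonneg j) hq

variable {β : Type*} [DecidableEq β] {s : ℝ≥0∞} [Fact (1 ≤ s)] [∀ i, Fact (1 ≤ p i)]
  (T : ContinuousMultilinearMap 𝕂 (fun i => lp (fun _ : α i => 𝕂) (p i))
    (lp (fun _ : β => 𝕂) s →L[𝕂] 𝕂))

theorem sum_piFinset_tsum_rpow_le [DecidableEq ι] (hsq : s.toReal.HolderConjugate q)
    (hT : ∀ j k, 0 ≤ T (unitTuple 𝕂 p j) (lp.single s k 1))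
    {w : ∀ i, α i → ℝ} (hw : ∀ i n, 0 ≤ w i n) (S : ∀ i, Finset (α i)) :
    ∑ j ∈ Fintype.piFinset S,
        (∑' k, ‖T (unitTuple 𝕂 p j) (lp.single s k 1)‖ ^ q) * (∏ i, w i (j i)) ^ q ≤
      (‖T‖ * ∏ i, ‖∑ n ∈ S i, lp.single (E := fun _ => 𝕂) (p i) n (w i n : 𝕂)‖) ^ q := by
  set y : ∀ i, lp (fun _ : α i => 𝕂) (p i) := fun i => ∑ n ∈ S i, lp.single (p i) n (w i n : 𝕂)
  have summable_coeff (j : ∀ i, α i) :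
      Summable fun k => ‖T (unitTuple 𝕂 p j) (lp.single s k 1)‖ ^ q * (∏ i, w i (j i)) ^ q :=
    (summable_norm_apply_single_rpow hsq _).mul_right _
  have coeff_le (k : β) :
      ∑ j ∈ Fintype.piFinset S,
        ‖T (unitTuple 𝕂 p j) (lp.single s k 1)‖ ^ q * (∏ i, w i (j i)) ^ q ≤
      ‖T y (lp.single s k 1)‖ ^ q :=
    sum_piFinset_rpow_le_norm_map_sum_single_rpow hsq.symm.lt.le
      ((ContinuousLinearMap.apply 𝕂 𝕂 (lp.single s k 1)).compContinuousMultilinearMap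
        T).toMultilinearMap (fun j => hT j k) hw S
  calc
    _ = ∑' k, ∑ j ∈ Fintype.piFinset S,
          ‖T (unitTuple 𝕂 p j) (lp.single s k 1)‖ ^ q * (∏ i, w i (j i)) ^ q := by
      rw [Summable.tsum_finsetSum fun j _ => summable_coeff j]
      simp only [tsum_mul_right]
    _ ≤ ∑' k, ‖T y (lp.single s k 1)‖ ^ q :=
      (summable_sum fun j _ => summable_coeff j).tsum_le_tsum coeff_le
        (summable_norm_apply_single_rpow hsq _)
    _ ≤ ‖T y‖ ^ q := tsum_norm_apply_single_rpow_le hsq _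
    _ ≤ (‖T‖ * ∏ i, ‖y i‖) ^ q := by
      gcongr
      · exact hsq.symm.nonneg
      · exact T.le_opNorm y

variable {r : ι → ℝ≥0∞} [∀ i, Fact (1 ≤ r i)]

theorem sum_tsum_rpow_mul_prod_norm_le (hsq : s.toReal.HolderConjugate q)
    (hpr : ∀ i, p i = r i * ENNReal.ofReal q)
    (hT : ∀ j k, 0 ≤ T (unitTuple 𝕂 p j) (lp.single s k 1))
    (x : ∀ i, lp (fun _ : α i => 𝕂) (r i)) (F : Finset (∀ i, α i)) :
    ∑ j ∈ F, (∑' k, ‖T (unitTuple 𝕂 p j) (lp.single s k 1)‖ ^ q) * ∏ i, ‖x i (j i)‖ ≤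
      ‖T‖ ^ q * ∏ i, ‖x i‖ := by
  classical
  have hq : 0 < q := hsq.symm.pos
  set w : ∀ i, α i → ℝ := fun i n => ‖x i n‖ ^ q⁻¹
  set S : ∀ i, Finset (α i) := fun i => F.image (· i)
  have prod_w_rpow (j : ∀ i, α i) : (∏ i, w i (j i)) ^ q = ∏ i, ‖x i (j i)‖ := by
    rw [← Real.finsetProd_rpow _ _ fun i _ => by positivity]
    exact prod_congr rfl fun i _ => Real.rpow_inv_rpow (norm_nonneg _) hq.ne'
  calc
    _ ≤ ∑ j ∈ Fintype.piFinset S,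
          (∑' k, ‖T (unitTuple 𝕂 p j) (lp.single s k 1)‖ ^ q) * ∏ i, ‖x i (j i)‖ :=
      sum_le_sum_of_subset_of_nonneg (subset_piFinset_image F) fun j _ _ =>
        mul_nonneg (tsum_nonneg fun k => by positivity) (by positivity)
    _ ≤ (‖T‖ * ∏ i, ‖∑ n ∈ S i, lp.single (E := fun _ => 𝕂) (p i) n (w i n : 𝕂)‖) ^ q := by
      simpa only [prod_w_rpow] using
        sum_piFinset_tsum_rpow_le T hsq hT (w := w) (fun i n => by positivity) S
    _ = ‖T‖ ^ q * ∏ i, ‖∑ n ∈ S i, lp.single (E := fun _ => 𝕂) (p i) n (w i n : 𝕂)‖ ^ q := by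
      rw [Real.mul_rpow (by positivity) (by positivity),
        Real.finsetProd_rpow _ _ fun i _ => norm_nonneg _]
    _ ≤ ‖T‖ ^ q * ∏ i, ‖x i‖ := by
      gcongr with i
      exact norm_sum_single_norm_rpow_inv_rpow_le (zero_lt_one.trans_le Fact.out).ne' hq (hpr i) _ _

theorem exists_unitTuple_eq_tsum_norm_rpow (hsq : s.toReal.HolderConjugate q)
    (hpr : ∀ i, p i = r i * ENNReal.ofReal q)
    (hT : ∀ j k, 0 ≤ T (unitTuple 𝕂 p j) (lp.single s k 1)) :
    ∃ A : ContinuousMultilinearMap 𝕂 (fun i => lp (fun _ : α i => 𝕂) (r i)) 𝕂,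
      (∀ j, A (unitTuple 𝕂 r j) =
        ((∑' k, ‖T (unitTuple 𝕂 p j) (lp.single s k 1)‖ ^ q : ℝ) : 𝕂)) ∧ ‖A‖ ≤ ‖T‖ ^ q := by
  refine exists_continuousMultilinearMap_unitTuple_eq _ (by positivity) fun x F => ?_
  simpa only [RCLike.norm_of_nonneg (tsum_nonneg fun _ => Real.rpow_nonneg (norm_nonneg _) _)] using
    sum_tsum_rpow_mul_prod_norm_le T hsq hpr hT x F

end Nonneg

theorem snoc_unitTuple {𝕂 : Type*} [NormedField 𝕂] {m : ℕ} {α : Fin (m + 1) → Type*}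
    [∀ i, DecidableEq (α i)] (p : Fin (m + 1) → ℝ≥0∞) (j : ∀ i : Fin m, α i.castSucc)
    (k : α (Fin.last m)) :
    (Fin.snoc (unitTuple 𝕂 (fun i => p i.castSucc) j) (lp.single (p (Fin.last m)) k 1) :
      ∀ i, lp (fun _ : α i => 𝕂) (p i)) = unitTuple 𝕂 p (Fin.snoc j k) := by
  funext i
  refine Fin.lastCases ?_ (fun i => ?_) i <;> simp [unitTuple]

theorem degree_lowering_step_general {𝕂 : Type*} [RCLike 𝕂] {m : ℕ} {α : Fin (m + 1) → Type*}
    [∀ i, DecidableEq (α i)] {p : Fin (m + 1) → ℝ≥0∞} [∀ i, Fact (1 ≤ p i)]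
    {q : ℝ} (hpq : (p (Fin.last m)).toReal.HolderConjugate q)
    {r : Fin m → ℝ≥0∞} [∀ i, Fact (1 ≤ r i)]
    (hpr : ∀ i : Fin m, p i.castSucc = r i * ENNReal.ofReal q)
    (D : ContinuousMultilinearMap 𝕂 (fun i => lp (fun _ : α i => 𝕂) (p i)) 𝕂)
    (hD : ∀ j : ∀ i, α i, ∃ t : ℝ, 0 ≤ t ∧ D (unitTuple 𝕂 p j) = t) :
    ∃ A : ContinuousMultilinearMap 𝕂 (fun i : Fin m => lp (fun _ : α i.castSucc => 𝕂) (r i)) 𝕂,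
      (∀ j, ∃ t : ℝ, 0 ≤ t ∧ A (unitTuple 𝕂 r j) = t) ∧
      (∀ j, A (unitTuple 𝕂 r j) =
        ((∑' k, (RCLike.re (D (unitTuple 𝕂 p (Fin.snoc j k)))) ^ q : ℝ) : 𝕂)) ∧
      ‖A‖ ≤ ‖D‖ ^ q := by
  have curry_apply (j : ∀ i : Fin m, α i.castSucc) (k : α (Fin.last m)) :
      D.curryRight (unitTuple 𝕂 (fun i => p i.castSucc) j) (lp.single (p (Fin.last m)) k 1) =
        D (unitTuple 𝕂 p (Fin.snoc j k)) := by
    rw [D.curryRight_apply, snoc_unitTuple]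
  have coeff_nonneg (j : ∀ i, α i) : 0 ≤ D (unitTuple 𝕂 p j) := by
    obtain ⟨t, ht, hDt⟩ := hD j
    exact RCLike.nonneg_iff_exists_ofReal.2 ⟨t, ht, hDt.symm⟩
  have re_coeff (j : ∀ i, α i) : RCLike.re (D (unitTuple 𝕂 p j)) = ‖D (unitTuple 𝕂 p j)‖ := by
    conv_lhs => rw [← RCLike.norm_of_nonneg' (coeff_nonneg j), RCLike.ofReal_re]
  obtain ⟨A, hA, norm_A⟩ := exists_unitTuple_eq_tsum_norm_rpow D.curryRight hpq hpr
    fun j k => (coeff_nonneg _).trans_eq (curry_apply j k).symm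
  simp only [curry_apply] at hA
  rw [D.curryRight_norm] at norm_A
  refine ⟨A, fun j => ⟨_, tsum_nonneg fun _ => Real.rpow_nonneg (norm_nonneg _) _, hA j⟩,
    fun j => ?_, norm_A⟩
  simp only [hA, re_coeff]

/-- **The induction step: lowering the degree of a positive multilinear form.**
Let `m + 1 ≥ 2`, let `p₁, …, p_{m+1} ∈ (1, ∞)` with `1/p₁ + ⋯ + 1/p_{m+1} < 1`,
and let `D : ℓ_{p₁} × ⋯ × ℓ_{p_{m+1}} → 𝕂` be a bounded nonnegative
`(m+1)`-linear form.  With `p* ` the conjugate exponent of the last exponent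
`p_{m+1}` and `r_i := p_i / p*`, there exists a bounded nonnegative `m`-linear
form `A : ℓ_{r₁} × ⋯ × ℓ_{r_m} → 𝕂` with
`A(e_{j₁},…,e_{j_m}) = Σ_{j_{m+1}} D(e_{j₁},…,e_{j_{m+1}})^{p*}` for all indices,
and `‖A‖ ≤ ‖D‖^{p*}`. -/
theorem degree_lowering_step
    (𝕂 : Type*) [RCLike 𝕂] (m : ℕ) (hm : 1 ≤ m)
    (p : Fin (m + 1) → ℝ) (hp : ∀ i, 1 < p i)
    [∀ i, Fact (1 ≤ ENNReal.ofReal (p i))]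
    (hsum : ∑ i, 1 / p i < 1)
    (pstar : ℝ) (hpstar : 1 / p (Fin.last m) + 1 / pstar = 1)
    [∀ i : Fin m, Fact (1 ≤ ENNReal.ofReal (p (Fin.castSucc i) / pstar))]
    (D : ContinuousMultilinearMap 𝕂
      (fun i : Fin (m + 1) => lp (fun _ : ℕ => 𝕂) (ENNReal.ofReal (p i))) 𝕂)
    (hD : ∀ j : Fin (m + 1) → ℕ, ∃ r : ℝ, 0 ≤ r ∧
      D (fun i => lp.single (ENNReal.ofReal (p i)) (j i) 1) = (r : 𝕂)) :
    ∃ A : ContinuousMultilinearMap 𝕂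
        (fun i : Fin m => lp (fun _ : ℕ => 𝕂) (ENNReal.ofReal (p (Fin.castSucc i) / pstar))) 𝕂,
      (∀ j : Fin m → ℕ, ∃ r : ℝ, 0 ≤ r ∧
        A (fun i => lp.single (ENNReal.ofReal (p (Fin.castSucc i) / pstar)) (j i) 1) = (r : 𝕂)) ∧
      (∀ j : Fin m → ℕ,
        A (fun i => lp.single (ENNReal.ofReal (p (Fin.castSucc i) / pstar)) (j i) 1) =
          ((∑' jm : ℕ,
            (RCLike.re (D (fun i =>
              lp.single (ENNReal.ofReal (p i)) ((Fin.snoc j jm : Fin (m + 1) → ℕ) i) 1))) ^ pstar : ℝ) : 𝕂)) ∧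
      ‖A‖ ≤ ‖D‖ ^ pstar := by
  have hpq : (p (Fin.last m)).HolderConjugate pstar :=
    Real.holderConjugate_iff.2 ⟨hp _, by simpa only [one_div] using hpstar⟩
  refine degree_lowering_step_general (by rwa [ENNReal.toReal_ofReal hpq.nonneg])
    (fun i => ?_) D hD
  rw [← ENNReal.ofReal_mul' hpq.symm.nonneg, div_mul_cancel₀ _ hpq.symm.ne_zero]
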